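/- Let G be a P4-sparse graph and let A be a set of four vertices inducing a P4 in G. Then there do not exist vertices v in P(A), distinct x, y in T(A), and z in I(A) such that the edges of G among {v, x, y, z} are exactly vx, xy, and yz. -/

import Mathlib

open SimpleGraph

variable {V : Type*}

/-- `a, b, c, d` form an induced path on four vertices (a `P4`) in `G`. -/
def IsP4 (G : SimpleGraph V) (a b c d : V) : Prop :=
  a ≠ b ∧ a ≠ c ∧ a ≠ d ∧ b ≠ c ∧ b ≠ d ∧ c ≠ d ∧
    G.Adj a b ∧ G.Adj b c ∧ G.Adj c d ∧ ¬G.Adj a c ∧ ¬G.Adj a d ∧ ¬G.Adj b d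

/-- A graph is a cograph if it contains no induced `P4`. -/
def IsCograph (G : SimpleGraph V) : Prop :=
  ∀ a b c d : V, ¬IsP4 G a b c d

/-- The vertex set `A` induces a `P4` in `G`. -/
def InducesP4 (G : SimpleGraph V) (A : Set V) : Prop :=
  ∃ a b c d : V, IsP4 G a b c d ∧ A = {a, b, c, d}

/-- `G` is `P4`-sparse: every set of five vertices induces at most one `P4`. -/
def P4Sparse (G : SimpleGraph V) : Prop :=
  ∀ s : Set V, s.ncard = 5 →
    ∀ A B : Set V, A ⊆ s → B ⊆ s → InducesP4 G A → InducesP4 G B → A = B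

/-- `F` is a deletion set of `G`: a set of edges of `G` whose removal yields a cograph. -/
def IsDeletionSet (G : SimpleGraph V) (F : Set (Sym2 V)) : Prop :=
  F ⊆ G.edgeSet ∧ IsCograph (G.deleteEdges F)

/-- The minimum size of a deletion set of `G`. -/
noncomputable def cographAlpha (G : SimpleGraph V) : ℕ :=
  sInf {n | ∃ F : Set (Sym2 V), IsDeletionSet G F ∧ F.ncard = n}

/-- `T(A)`: the vertices outside `A` adjacent to all vertices of `A`. -/
def tSet (G : SimpleGraph V) (A : Set V) : Set V :=
  {v | v ∉ A ∧ ∀ a ∈ A, G.Adj v a}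

/-- `I(A)`: the vertices outside `A` adjacent to no vertex of `A`. -/
def iSet (G : SimpleGraph V) (A : Set V) : Set V :=
  {v | v ∉ A ∧ ∀ a ∈ A, ¬G.Adj v a}

/-- `P(A)`: the vertices `v` outside `A` with `1 ≤ |N(v) ∩ A| ≤ 3`. -/
def pSet (G : SimpleGraph V) (A : Set V) : Set V :=
  {v | v ∉ A ∧ 1 ≤ (G.neighborSet v ∩ A).ncard ∧ (G.neighborSet v ∩ A).ncard ≤ 3}

namespace IsP4

variable {G : SimpleGraph V} {a b c d : V}

theorem of_adj (hab : G.Adj a b) (hbc : G.Adj b c) (hcd : G.Adj c d)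
    (hac : ¬G.Adj a c) (had : ¬G.Adj a d) (hbd : ¬G.Adj b d) : IsP4 G a b c d :=
  have hne_ac : a ≠ c := fun h => had (h ▸ hcd)
  have hne_ad : a ≠ d := fun h => hac (h ▸ hcd.symm)
  have hne_bd : b ≠ d := fun h => had (h ▸ hab)
  ⟨hab.ne, hne_ac, hne_ad, hbc.ne, hne_bd, hcd.ne, hab, hbc, hcd, hac, had, hbd⟩

theorem inducesP4_insert_second (h : IsP4 G a b c d) : InducesP4 G (insert b {a, c, d}) :=
  ⟨a, b, c, d, h, Set.insert_comm b a {c, d}⟩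

theorem second_notMem (h : IsP4 G a b c d) : b ∉ ({a, c, d} : Set V) := by
  obtain ⟨hab, -, -, hbc, hbd, -⟩ := h
  simp [hab.symm, hbc, hbd]

end IsP4

theorem InducesP4.ncard_eq_four {G : SimpleGraph V} {A : Set V} (hA : InducesP4 G A) :
    A.ncard = 4 := by
  obtain ⟨a, b, c, d, ⟨hab, hac, had, hbc, hbd, hcd, -⟩, rfl⟩ := hA
  exact Set.ncard_eq_four.mpr ⟨a, b, c, d, hab, hac, had, hbc, hbd, hcd, rfl⟩

namespace P4Sparse

variable {G : SimpleGraph V}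

theorem eq_of_inducesP4_insert (hG : P4Sparse G) {S : Set V} {x w : V}
    (hx : InducesP4 G (insert x S)) (hw : InducesP4 G (insert w S)) (hwS : w ∉ S) : x = w := by
  by_contra hxw
  have hw_notMem : w ∉ insert x S := by simp [Ne.symm hxw, hwS]
  have hfin : (insert x S).Finite := Set.finite_of_ncard_ne_zero (by simp [hx.ncard_eq_four])
  have hcard : (insert w (insert x S)).ncard = 5 := by
    rw [Set.ncard_insert_of_notMem hw_notMem hfin, hx.ncard_eq_four]
  have heq : insert x S = insert w S :=
    hG _ hcard _ _ (Set.subset_insert _ _) (Set.insert_subset_insert (Set.subset_insert _ _)) hx hw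
  exact hw_notMem (heq ▸ Set.mem_insert w S)

theorem isP4_second_unique (hG : P4Sparse G) {a b b' c d : V}
    (h : IsP4 G a b c d) (h' : IsP4 G a b' c d) : b = b' :=
  hG.eq_of_inducesP4_insert h.inducesP4_insert_second h'.inducesP4_insert_second h'.second_notMem

end P4Sparse

theorem p4Sparse_fact_2_15_four_general (G : SimpleGraph V) (hG : P4Sparse G) (A : Set V) :
    ¬∃ v x y z : V, (G.neighborSet v ∩ A).Nonempty ∧ x ∈ tSet G A ∧ y ∈ tSet G A ∧ z ∈ iSet G A ∧
      G.Adj v x ∧ ¬G.Adj v y ∧ ¬G.Adj v z ∧ G.Adj x y ∧ ¬G.Adj x z ∧ G.Adj y z := by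
  rintro ⟨v, x, y, z, ⟨w, hvw, hwA⟩, ⟨-, hxA⟩, ⟨-, hyA⟩, ⟨-, hzA⟩, hvx, hvy, hvz, hxy, hxz, hyz⟩
  have hwy : G.Adj w y := (hyA w hwA).symm
  have hwz : ¬G.Adj w z := fun h => hzA w hwA h.symm
  -- A neighbour `w ∈ A` of `v` sees `y` and misses `z`, so it can replace `x` in the path.
  have hP4x : IsP4 G v x y z := .of_adj hvx hxy hyz hvy hvz hxz
  have hP4w : IsP4 G v w y z := .of_adj hvw hwy hyz hvy hvz hwz
  exact (hxA w hwA).ne (hG.isP4_second_unique hP4x hP4w)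

/-- **Fact 2.15, four-vertex form.** If `G` is `P4`-sparse and `A` induces a
`P4`, then there are no `v ∈ P(A)`, distinct `x, y ∈ T(A)`, and `z ∈ I(A)` such that the
edges of `G` among `{v, x, y, z}` are exactly `vx`, `xy`, and `yz`. -/
theorem p4Sparse_fact_2_15_four (G : SimpleGraph V) (hG : P4Sparse G)
    (a b c d : V) (hP4 : IsP4 G a b c d) (A : Set V) (hA : A = {a, b, c, d}) :
    ¬∃ v x y z : V, x ≠ y ∧ v ∈ pSet G A ∧ x ∈ tSet G A ∧ y ∈ tSet G A ∧ z ∈ iSet G A ∧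
      G.Adj v x ∧ ¬G.Adj v y ∧ ¬G.Adj v z ∧ G.Adj x y ∧ ¬G.Adj x z ∧ G.Adj y z := by
  rintro ⟨v, x, y, z, -, ⟨-, hv, -⟩, h⟩
  exact p4Sparse_fact_2_15_four_general G hG A
    ⟨v, x, y, z, Set.nonempty_of_ncard_ne_zero (Nat.one_le_iff_ne_zero.mp hv), h⟩
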